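/- Let α > 0 with α ∉ ℕ, d ≥ 1, ℓ = ⌊α⌋⁻, m = C(ℓ+d, ℓ), and fix constants c_L ≥ c_d > 0 and c_N > 0. There is a constant C > 0 depending only on α, d, c_d, c_L and c_N such that the following holds. Let L ∈ (0, 1], let x ∈ ℝ^d, and let A ⊂ ℝ^d be a set of m points satisfying the geometric hypotheses at scale L with constants c_L, c_d, c_N. Then for every τ > 0 and every c ∈ [−1, 1], the Matérn kernel matrix K_{τA,τA} is invertible and |c − c · 𝟙ᵀ (K_{τA,τA})⁻¹ K_{τA,τx}| ≤ C |c| (τL)^α, where 𝟙 ∈ ℝ^m is the all-ones vector; that is, interpolating the constant function c from τA to τx via the Matérn kernel incurs error at most C |c| (τL)^α. -/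

import Mathlib

open Matrix MeasureTheory

noncomputable section

/-- The Matérn function with regularity `α` on ℝ^d (Fourier normalization):
`K_α(x) = ∫ cos⟨x,ξ⟩ (1+‖ξ‖₂²)^{-(α+d/2)} dξ`. -/
def matern (α : ℝ) (d : ℕ) (x : Fin d → ℝ) : ℝ :=
  ∫ ξ : Fin d → ℝ, Real.cos (∑ j, x j * ξ j) * (1 + ∑ j, ξ j ^ 2) ^ (-(α + (d : ℝ) / 2))

/-- `⌊α⌋⁻`, the largest integer strictly smaller than `α` (for `α > 0`). -/
def lbelow (α : ℝ) : ℕ := Nat.ceil α - 1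

/-- `α` is a (nonnegative) integer. -/
def IsNatVal (α : ℝ) : Prop := ∃ n : ℕ, α = n

/-- The Euclidean norm `‖x‖₂` on ℝ^d. -/
def nrm {d : ℕ} (x : Fin d → ℝ) : ℝ := Real.sqrt (∑ j, x j ^ 2)

/-- Partial derivative in the `j`-th coordinate. -/
def pder (d : ℕ) (j : Fin d) (f : (Fin d → ℝ) → ℝ) : (Fin d → ℝ) → ℝ :=
  fun x => fderiv ℝ f x (Pi.single j 1)

/-- The iterated partial derivative `∂^k` associated with a multi-index `k ∈ ℕ^d`. -/
def mder (d : ℕ) (k : Fin d → ℕ) (f : (Fin d → ℝ) → ℝ) : (Fin d → ℝ) → ℝ :=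
  (List.finRange d).foldr (fun j g => (pder d j)^[k j] g) f

/-- Mixed derivative `F^{(k₁,k₂)}(x₁,x₂) = ∂^{k₁}_{x₁} ∂^{k₂}_{x₂} F(x₁,x₂)`. -/
def mder2 (d : ℕ) (k₁ k₂ : Fin d → ℕ) (F : (Fin d → ℝ) → (Fin d → ℝ) → ℝ)
    (x₁ x₂ : Fin d → ℝ) : ℝ :=
  mder d k₁ (fun y => mder d k₂ (F y) x₂) x₁

/-- The Matérn kernel matrix `K_{A,A} = (K(w_i, w_j))_{i,j}`. -/
def maternMat (α : ℝ) (d : ℕ) {n : ℕ} (w : Fin n → Fin d → ℝ) :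
    Matrix (Fin n) (Fin n) ℝ :=
  Matrix.of fun i j => matern α d (w i - w j)

/-- The Matérn kernel column vector `K_{A,x} = (K(w_i, x))_i`. -/
def maternVec (α : ℝ) (d : ℕ) {n : ℕ} (w : Fin n → Fin d → ℝ) (x : Fin d → ℝ) :
    Fin n → ℝ :=
  fun i => matern α d (w i - x)

/-- The conditional kernel `K̃(x₁,x₂) = K(x₁,x₂) − K_{x₁,A} K_{A,A}⁻¹ K_{A,x₂}`. -/
def condK (α : ℝ) (d : ℕ) {n : ℕ} (w : Fin n → Fin d → ℝ) (x₁ x₂ : Fin d → ℝ) : ℝ :=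
  matern α d (x₁ - x₂) -
    maternVec α d w x₁ ⬝ᵥ ((maternMat α d w)⁻¹ *ᵥ maternVec α d w x₂)

/-- The unit cube `[0,1]^d`. -/
def unitCube (d : ℕ) : Set (Fin d → ℝ) := {x | ∀ t, 0 ≤ x t ∧ x t ≤ 1}

/-- `A = {w_1,…,w_m}` is a norming set for `𝒫_l(Ω)` with norming constant `c`. -/
def IsNorming {d : ℕ} (l : ℕ) (Ω : Set (Fin d → ℝ)) {m : ℕ}
    (w : Fin m → Fin d → ℝ) (c : ℝ) : Prop :=
  ∀ P : MvPolynomial (Fin d) ℝ, P.totalDegree ≤ l →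
    ∀ x ∈ Ω, |MvPolynomial.eval x P| ≤ c * ⨆ i : Fin m, |MvPolynomial.eval (w i) P|

/-- Axis-parallel cube with corner `z` and side length `s`. -/
def cube (d : ℕ) (z : Fin d → ℝ) (s : ℝ) : Set (Fin d → ℝ) :=
  {y | ∀ t, z t ≤ y t ∧ y t ≤ z t + s}

/-- Geometric hypotheses at scale `L` with constants `c_L, c_d, c_N`: `A ∪ {x}` lies in an
axis-parallel cube of side length at most `c_L·L`, the points `w_1,…,w_m, x` are pairwise at
`‖·‖_∞`-distance at least `c_d·L`, and `A` is a norming set for `𝒫_{⌊α⌋⁻}` of that cube with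
norming constant `c_N`. -/
def GeomHyp (α : ℝ) (d : ℕ) (cL cd cN L : ℝ) {m : ℕ}
    (w : Fin m → Fin d → ℝ) (x : Fin d → ℝ) : Prop :=
  ∃ z : Fin d → ℝ, ∃ s : ℝ, 0 ≤ s ∧ s ≤ cL * L ∧
    (∀ i, w i ∈ cube d z s) ∧ x ∈ cube d z s ∧
    (∀ i j, i ≠ j → ∃ t, cd * L ≤ |w i t - w j t|) ∧
    (∀ i, ∃ t, cd * L ≤ |w i t - x t|) ∧
    IsNorming (lbelow α) (cube d z s) w cN

/-!
Interpolation weights minimise the norm of the error functional `f ↦ f x - ∑ i, u i * f (y i)` on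
the native space of the kernel, so any other weights `u` give an upper bound for this norm; testing
on smooth bumps, which lie in the native space, bounds the functional applied to a constant.
Let `r = τL`. For `r ≤ 1`, Hahn–Banach and the norming property give weights with bounded `ℓ¹` norm
that reproduce polynomials of degree at most `l = ⌊α⌋⁻`. The Fourier transform of the functional
then vanishes to order `l + 1 > α` at the origin, and rescaling the frequencies by `r` shows that
its squared norm is `O(r ^ (2 * α))`. A bump equal to `1` near all the points turns this into the
bound for constants. For `r ≥ 1` the points are uniformly separated, so disjoint bumps bound every
weight by the norm of the functional, and comparison with zero weights suffices.
-/

open scoped SchwartzMap FourierTransform ContDiff Topology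

/-! ### Cauchy–Schwarz and Hahn–Banach -/

theorem sq_norm_integral_mul_le {Ω 𝕜 : Type*} [MeasurableSpace Ω] [RCLike 𝕜] {μ : Measure Ω}
    {f g : Ω → 𝕜} {ρ : Ω → ℝ} (hρ : ∀ x, 0 < ρ x) (hρm : AEStronglyMeasurable ρ μ)
    (hfm : AEStronglyMeasurable f μ) (hgm : AEStronglyMeasurable g μ)
    (hf : Integrable (fun x => ‖f x‖ ^ 2 / ρ x) μ)
    (hg : Integrable (fun x => ‖g x‖ ^ 2 * ρ x) μ) :
    ‖∫ x, g x * f x ∂μ‖ ^ 2 ≤ (∫ x, ‖f x‖ ^ 2 / ρ x ∂μ) * ∫ x, ‖g x‖ ^ 2 * ρ x ∂μ := by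
  have hsqrtm : AEStronglyMeasurable (fun x => √(ρ x)) μ :=
    Real.continuous_sqrt.comp_aestronglyMeasurable hρm
  let F : Ω → 𝕜 := fun x => (√(ρ x))⁻¹ • f x
  let G : Ω → 𝕜 := fun x => √(ρ x) • g x
  have hF (x : Ω) : ‖F x‖ ^ 2 = ‖f x‖ ^ 2 / ρ x := by
    rw [norm_smul, mul_pow, norm_inv, inv_pow, Real.norm_eq_abs, sq_abs, Real.sq_sqrt (hρ x).le,
      inv_mul_eq_div]
  have hG (x : Ω) : ‖G x‖ ^ 2 = ‖g x‖ ^ 2 * ρ x := by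
    rw [norm_smul, mul_pow, Real.norm_eq_abs, sq_abs, Real.sq_sqrt (hρ x).le, mul_comm]
  have hFG (x : Ω) : ‖g x * f x‖ = ‖F x‖ * ‖G x‖ := by
    have := Real.sqrt_pos.2 (hρ x)
    simp only [F, G, norm_smul, norm_mul, norm_inv, Real.norm_of_nonneg this.le]
    field_simp
  have hFm : AEStronglyMeasurable F μ := hsqrtm.inv₀.smul hfm
  have hGm : AEStronglyMeasurable G μ := hsqrtm.smul hgm
  have hFL : MemLp F 2 μ := (memLp_two_iff_integrable_sq_norm hFm).2 (by simpa only [hF])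
  have hGL : MemLp G 2 μ := (memLp_two_iff_integrable_sq_norm hGm).2 (by simpa only [hG])
  have hA : 0 ≤ ∫ x, ‖F x‖ ^ 2 ∂μ := integral_nonneg fun x => sq_nonneg _
  have hB : 0 ≤ ∫ x, ‖G x‖ ^ 2 ∂μ := integral_nonneg fun x => sq_nonneg _
  have hcauchySchwarz : ∫ x, ‖F x‖ * ‖G x‖ ∂μ ≤ √(∫ x, ‖F x‖ ^ 2 ∂μ) * √(∫ x, ‖G x‖ ^ 2 ∂μ) := by
    simpa only [Real.rpow_two, ← Real.sqrt_eq_rpow] using integral_mul_norm_le_Lp_mul_Lq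
      Real.HolderConjugate.two_two (by simpa using hFL) (by simpa using hGL)
  calc ‖∫ x, g x * f x ∂μ‖ ^ 2
      ≤ (√(∫ x, ‖F x‖ ^ 2 ∂μ) * √(∫ x, ‖G x‖ ^ 2 ∂μ)) ^ 2 := by
        gcongr
        exact (norm_integral_le_integral_norm _).trans (by simpa only [hFG] using hcauchySchwarz)
    _ = (∫ x, ‖f x‖ ^ 2 / ρ x ∂μ) * ∫ x, ‖g x‖ ^ 2 * ρ x ∂μ := by
        rw [mul_pow, Real.sq_sqrt hA, Real.sq_sqrt hB]
        simp only [hF, hG]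

theorem exists_strongDual_comp_eq {𝕜 V F : Type*} [RCLike 𝕜] [AddCommGroup V] [Module 𝕜 V]
    [NormedAddCommGroup F] [NormedSpace 𝕜 F] (E : V →ₗ[𝕜] F) (φ : V →ₗ[𝕜] 𝕜) {c : ℝ}
    (hc : 0 ≤ c) (h : ∀ v, ‖φ v‖ ≤ c * ‖E v‖) :
    ∃ g : StrongDual 𝕜 F, ‖g‖ ≤ c ∧ ∀ v, g (E v) = φ v := by
  have hφ : φ ∈ LinearMap.range E.dualMap := by
    rw [LinearMap.range_dualMap_eq_dualAnnihilator_ker, Submodule.mem_dualAnnihilator]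
    intro v hv
    simpa [LinearMap.mem_ker.1 hv] using h v
  obtain ⟨f, rfl⟩ := hφ
  let f₀ : StrongDual 𝕜 (LinearMap.range E) :=
    (f.domRestrict (LinearMap.range E)).mkContinuous c (by rintro ⟨_, v, rfl⟩; exact h v)
  obtain ⟨g, hg, hgf⟩ := exists_extension_norm_eq (LinearMap.range E) f₀
  exact ⟨g, hgf ▸ LinearMap.mkContinuous_norm_le _ hc _, fun v => hg ⟨E v, v, rfl⟩⟩

theorem strongDual_apply_eq_sum {ι : Type*} [Fintype ι] [DecidableEq ι] (g : StrongDual ℝ (ι → ℝ))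
    (y : ι → ℝ) : g y = ∑ i, g (Pi.single i 1) * y i := by
  conv_lhs => rw [pi_eq_sum_univ' y]
  simp [mul_comm]

theorem sum_abs_apply_single_le {ι : Type*} [Fintype ι] [DecidableEq ι]
    (g : StrongDual ℝ (ι → ℝ)) : ∑ i, |g (Pi.single i 1)| ≤ ‖g‖ := by
  let σ : ι → ℝ := fun i => SignType.sign (g (Pi.single i 1))
  have hσ : ‖σ‖ ≤ 1 := (pi_norm_le_iff_of_nonneg zero_le_one).2 fun i => by
    rcases (SignType.sign (g (Pi.single i 1))).trichotomy with h | h | h <;> simp [σ, h]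
  calc ∑ i, |g (Pi.single i 1)| = g σ := by
        rw [strongDual_apply_eq_sum g σ]
        simp only [σ, self_mul_sign]
    _ ≤ ‖g‖ * ‖σ‖ := (le_abs_self _).trans (g.le_opNorm σ)
    _ ≤ ‖g‖ := mul_le_of_le_one_right (norm_nonneg g) hσ

/-! ### Polynomial reproduction -/

theorem totalDegree_aeval_le {σ τ R : Type*} [CommSemiring R] {f : σ → MvPolynomial τ R}
    (hf : ∀ i, (f i).totalDegree ≤ 1) (P : MvPolynomial σ R) :
    (MvPolynomial.aeval f P).totalDegree ≤ P.totalDegree := by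
  rw [MvPolynomial.aeval_def, MvPolynomial.eval₂_eq]
  refine MvPolynomial.totalDegree_finsetSum_le fun s hs => ?_
  refine (MvPolynomial.totalDegree_mul _ _).trans ?_
  rw [MvPolynomial.algebraMap_eq, MvPolynomial.totalDegree_C, zero_add]
  calc (∏ i ∈ s.support, f i ^ s i).totalDegree ≤ ∑ i ∈ s.support, (f i ^ s i).totalDegree :=
        MvPolynomial.totalDegree_finsetProd _ _
    _ ≤ ∑ i ∈ s.support, s i := Finset.sum_le_sum fun i _ =>
        (MvPolynomial.totalDegree_pow _ _).trans (mul_le_of_le_one_right' (hf i))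
    _ ≤ P.totalDegree := MvPolynomial.le_totalDegree hs

/-- The functional `f ↦ ∑ i, v i * f (y i)` vanishes on the polynomials of degree at most `l`. -/
def AnnihilatesPoly {d : ℕ} {ι : Type*} [Fintype ι] (l : ℕ) (v : ι → ℝ) (y : ι → Fin d → ℝ) :
    Prop :=
  ∀ P : MvPolynomial (Fin d) ℝ, P.totalDegree ≤ l → ∑ i, v i * MvPolynomial.eval (y i) P = 0

/-- The points `y` together with the evaluation point `x`, which gets the index `none`. -/
def consPoint {d : ℕ} {ι : Type*} (x : Fin d → ℝ) (y : ι → Fin d → ℝ) : Option ι → Fin d → ℝ :=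
  fun o => o.elim x y

/-- The weights of the error functional `f ↦ f x - ∑ i, u i * f (y i)` at `consPoint x y`. -/
def errWeight {ι : Type*} (u : ι → ℝ) : Option ι → ℝ :=
  fun o => o.elim 1 fun i => -u i

theorem smul_consPoint {d : ℕ} {ι : Type*} (τ : ℝ) (x : Fin d → ℝ) (y : ι → Fin d → ℝ)
    (o : Option ι) : τ • consPoint x y o = consPoint (τ • x) (fun i => τ • y i) o := by
  cases o <;> rfl

section Polynomials

variable {d l : ℕ} {ι : Type*} [Fintype ι]

theorem AnnihilatesPoly.comp_affine {d' : ℕ} {v : ι → ℝ} {y : ι → Fin d → ℝ}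
    (h : AnnihilatesPoly l v y) {f : Fin d' → MvPolynomial (Fin d) ℝ}
    (hf : ∀ t, (f t).totalDegree ≤ 1) :
    AnnihilatesPoly l v fun i t => MvPolynomial.eval (y i) (f t) := by
  intro P hP
  have heval (i : ι) : MvPolynomial.eval (y i) (MvPolynomial.aeval f P) =
      MvPolynomial.eval (fun t => MvPolynomial.eval (y i) (f t)) P := by
    simp only [← MvPolynomial.aeval_eq_eval, ← AlgHom.comp_apply, MvPolynomial.comp_aeval]
  simpa only [heval] using h _ ((totalDegree_aeval_le hf P).trans hP)

theorem AnnihilatesPoly.smul {v : ι → ℝ} {y : ι → Fin d → ℝ} (h : AnnihilatesPoly l v y) (τ : ℝ) :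
    AnnihilatesPoly l v fun i => τ • y i := by
  have hdeg (t : Fin d) : (τ • MvPolynomial.X t : MvPolynomial (Fin d) ℝ).totalDegree ≤ 1 :=
    (MvPolynomial.totalDegree_smul_le _ _).trans (MvPolynomial.totalDegree_X t).le
  convert h.comp_affine hdeg using 3
  simp

theorem AnnihilatesPoly.sub_const {v : ι → ℝ} {y : ι → Fin d → ℝ} (h : AnnihilatesPoly l v y)
    (z : Fin d → ℝ) : AnnihilatesPoly l v fun i => y i - z := by
  have hdeg (t : Fin d) :
      (MvPolynomial.X t - MvPolynomial.C (z t) : MvPolynomial (Fin d) ℝ).totalDegree ≤ 1 :=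
    (MvPolynomial.totalDegree_sub_C_le _ _).trans (MvPolynomial.totalDegree_X t).le
  convert h.comp_affine hdeg using 3
  simp

theorem AnnihilatesPoly.sum_mul_dotProduct_pow {v : ι → ℝ} {y : ι → Fin d → ℝ}
    (h : AnnihilatesPoly l v y) (ξ : Fin d → ℝ) {k : ℕ} (hk : k ≤ l) :
    ∑ i, v i * (y i ⬝ᵥ ξ) ^ k = 0 := by
  let P : MvPolynomial (Fin d) ℝ := ∑ t, ξ t • MvPolynomial.X t
  have hP : P.totalDegree ≤ 1 := MvPolynomial.totalDegree_finsetSum_le fun t _ =>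
    (MvPolynomial.totalDegree_smul_le _ _).trans (MvPolynomial.totalDegree_X t).le
  have heval (i : ι) : MvPolynomial.eval (y i) (P ^ k) = (y i ⬝ᵥ ξ) ^ k := by
    simp [P, dotProduct, mul_comm]
  simpa only [heval] using
    h (P ^ k) ((MvPolynomial.totalDegree_pow _ _).trans ((mul_le_of_le_one_right' hP).trans hk))

theorem sum_errWeight (u : ι → ℝ) : ∑ o, errWeight u o = 1 - ∑ i, u i := by
  simp [errWeight, sub_eq_add_neg]

theorem sum_abs_errWeight (u : ι → ℝ) : ∑ o, |errWeight u o| = 1 + ∑ i, |u i| := by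
  simp [errWeight]

theorem IsNorming.nonneg {m : ℕ} {Ω : Set (Fin d → ℝ)} {w : Fin m → Fin d → ℝ} {c : ℝ}
    (h : IsNorming l Ω w c) (hΩ : Ω.Nonempty) : 0 ≤ c := by
  obtain ⟨x, hx⟩ := hΩ
  have hone : 1 ≤ c * ⨆ _ : Fin m, (1 : ℝ) := by simpa using h 1 (by simp) x hx
  exact (pos_of_mul_pos_left (one_pos.trans_le hone) (Real.iSup_nonneg fun _ => zero_le_one)).le

/-- By Hahn–Banach, evaluation at `x` extends from the restrictions of polynomials to `w` to a
functional on `ℓ^∞` with the same norm; the `ℓ¹` norm of its coefficients is that norm. -/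
theorem IsNorming.exists_weights {m : ℕ} {Ω : Set (Fin d → ℝ)} {w : Fin m → Fin d → ℝ} {c : ℝ}
    (h : IsNorming l Ω w c) {x : Fin d → ℝ} (hx : x ∈ Ω) :
    ∃ u : Fin m → ℝ, ∑ i, |u i| ≤ c ∧ AnnihilatesPoly l (errWeight u) (consPoint x w) := by
  let evalAt (y : Fin d → ℝ) : MvPolynomial.restrictTotalDegree (Fin d) ℝ l →ₗ[ℝ] ℝ :=
    (MvPolynomial.aeval y).toLinearMap ∘ₗ Submodule.subtype _
  let E := LinearMap.pi fun i => evalAt (w i)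
  have hbound (P) : ‖evalAt x P‖ ≤ c * ‖E P‖ := by
    refine (h P.1 ((MvPolynomial.mem_restrictTotalDegree _ _ _).1 P.2) x hx).trans ?_
    refine mul_le_mul_of_nonneg_left ?_ (h.nonneg ⟨x, hx⟩)
    exact Real.iSup_le (norm_le_pi_norm (E P)) (norm_nonneg _)
  obtain ⟨g, hgc, hg⟩ := exists_strongDual_comp_eq E (evalAt x) (h.nonneg ⟨x, hx⟩) hbound
  refine ⟨fun i => g (Pi.single i 1), (sum_abs_apply_single_le g).trans hgc, fun P hP => ?_⟩
  have hrepr : ∑ i, g (Pi.single i 1) * MvPolynomial.eval (w i) P = MvPolynomial.eval x P := by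
    have hgP := hg ⟨P, (MvPolynomial.mem_restrictTotalDegree _ _ _).2 hP⟩
    rwa [strongDual_apply_eq_sum] at hgP
  simp [errWeight, consPoint, hrepr]

end Polynomials

/-! ### The Matérn quadratic form and its native space -/

/-- The spectral density of the Matérn kernel. -/
def maternWeight (α : ℝ) (d : ℕ) (ξ : Fin d → ℝ) : ℝ :=
  (1 + ∑ j, ξ j ^ 2) ^ (-(α + (d : ℝ) / 2))

/-- The Fourier transform `ξ ↦ ∑ v_i exp(i ⟨y_i, ξ⟩)` of the discrete measure with mass `v i` at
`y i`. -/
def expSum {d : ℕ} {ι : Type*} [Fintype ι] (v : ι → ℝ) (y : ι → Fin d → ℝ) (ξ : Fin d → ℝ) : ℂ :=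
  ∑ i, (v i : ℂ) * Complex.exp ((y i ⬝ᵥ ξ : ℝ) * Complex.I)

/-- The quadratic form of the Matérn kernel: the squared norm of the functional
`f ↦ ∑ i, v i * f (y i)` on the reproducing kernel Hilbert space of the kernel. -/
def maternQuad (α : ℝ) (d : ℕ) {ι : Type*} [Fintype ι] (v : ι → ℝ) (y : ι → Fin d → ℝ) : ℝ :=
  ∑ i, ∑ j, v i * v j * matern α d (y i - y j)

/-- The function `φ` has norm at most `|N|` in the reproducing kernel Hilbert space (the native
space) of the Matérn kernel. By duality this is a bound on all finitely supported functionals,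
which avoids constructing the space. -/
def NativeNormLE (α : ℝ) {d : ℕ} (φ : (Fin d → ℝ) → ℝ) (N : ℝ) : Prop :=
  ∀ ⦃ι : Type⦄ [Fintype ι] (v : ι → ℝ) (y : ι → Fin d → ℝ),
    (∑ i, v i * φ (y i)) ^ 2 ≤ N ^ 2 * maternQuad α d v y

theorem norm_sq_le_sum_sq {ι : Type*} [Fintype ι] (ξ : ι → ℝ) : ‖ξ‖ ^ 2 ≤ ∑ j, ξ j ^ 2 := by
  have hnorm : ‖ξ‖ ≤ √(∑ j, ξ j ^ 2) :=
    (pi_norm_le_iff_of_nonneg (Real.sqrt_nonneg _)).2 fun j => Real.abs_le_sqrt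
      (Finset.single_le_sum (f := fun j => ξ j ^ 2) (fun i _ => sq_nonneg _) (Finset.mem_univ j))
  exact (Real.le_sqrt (norm_nonneg ξ) (by positivity)).1 hnorm

theorem maternWeight_pos (α : ℝ) {d : ℕ} (ξ : Fin d → ℝ) : 0 < maternWeight α d ξ := by
  unfold maternWeight
  positivity

theorem continuous_maternWeight (α : ℝ) (d : ℕ) : Continuous (maternWeight α d) := by
  unfold maternWeight
  exact Continuous.rpow_const (by fun_prop) fun ξ => Or.inl (by positivity)

theorem integrable_maternWeight {α : ℝ} (hα : 0 < α) (d : ℕ) :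
    Integrable (maternWeight α d) := by
  have hmajorant : Integrable fun ξ : Fin d → ℝ => (1 + ‖ξ‖ ^ 2) ^ (-(2 * α + d) / 2) :=
    integrable_rpow_neg_one_add_norm_sq (by simpa using hα)
  refine hmajorant.mono' (continuous_maternWeight α d).aestronglyMeasurable (.of_forall fun ξ => ?_)
  rw [Real.norm_of_nonneg (maternWeight_pos α ξ).le, maternWeight,
    show -(2 * α + (d : ℝ)) / 2 = -(α + (d : ℝ) / 2) by ring]
  exact Real.rpow_le_rpow_of_nonpos (by positivity) (by gcongr; exact norm_sq_le_sum_sq ξ)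
    (neg_nonpos.2 (by positivity))

section ExpSum

variable {d : ℕ} {ι : Type*} [Fintype ι]

theorem continuous_expSum (v : ι → ℝ) (y : ι → Fin d → ℝ) : Continuous (expSum v y) := by
  unfold expSum dotProduct
  fun_prop

theorem norm_expSum_le (v : ι → ℝ) (y : ι → Fin d → ℝ) (ξ : Fin d → ℝ) :
    ‖expSum v y ξ‖ ≤ ∑ i, |v i| := by
  refine (norm_sum_le _ _).trans_eq (Finset.sum_congr rfl fun i _ => ?_)
  rw [norm_mul, Complex.norm_exp_ofReal_mul_I, mul_one, Complex.norm_real, Real.norm_eq_abs]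

theorem norm_expSum_sq (v : ι → ℝ) (y : ι → Fin d → ℝ) (ξ : Fin d → ℝ) :
    ‖expSum v y ξ‖ ^ 2 = ∑ i, ∑ j, v i * v j * Real.cos ((y i - y j) ⬝ᵥ ξ) := by
  have hre : (expSum v y ξ).re = ∑ i, v i * Real.cos (y i ⬝ᵥ ξ) := by
    simp [expSum, Complex.exp_ofReal_mul_I_re]
  have him : (expSum v y ξ).im = ∑ i, v i * Real.sin (y i ⬝ᵥ ξ) := by
    simp [expSum, Complex.exp_ofReal_mul_I_im]
  rw [← Complex.normSq_eq_norm_sq, Complex.normSq_apply, hre, him, Finset.sum_mul_sum,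
    Finset.sum_mul_sum]
  simp only [← Finset.sum_add_distrib]
  refine Finset.sum_congr rfl fun i _ => Finset.sum_congr rfl fun j _ => ?_
  rw [sub_dotProduct, Real.cos_sub]
  ring

theorem integrable_norm_expSum_sq_mul {α : ℝ} (hα : 0 < α) (v : ι → ℝ) (y : ι → Fin d → ℝ) :
    Integrable fun ξ => ‖expSum v y ξ‖ ^ 2 * maternWeight α d ξ := by
  refine (integrable_maternWeight hα d).bdd_mul (c := (∑ i, |v i|) ^ 2)
    ((continuous_expSum v y).norm.pow 2).aestronglyMeasurable (.of_forall fun ξ => ?_)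
  rw [norm_pow, norm_norm]
  gcongr
  exact norm_expSum_le v y ξ

theorem maternQuad_eq_integral {α : ℝ} (hα : 0 < α) (v : ι → ℝ) (y : ι → Fin d → ℝ) :
    maternQuad α d v y = ∫ ξ, ‖expSum v y ξ‖ ^ 2 * maternWeight α d ξ := by
  have hterm (i j : ι) : Integrable fun ξ : Fin d → ℝ =>
      v i * v j * (Real.cos ((y i - y j) ⬝ᵥ ξ) * maternWeight α d ξ) := by
    have hcont : Continuous fun ξ => Real.cos ((y i - y j) ⬝ᵥ ξ) := by
      unfold dotProduct
      fun_prop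
    exact ((integrable_maternWeight hα d).bdd_mul (c := 1) hcont.aestronglyMeasurable
      (.of_forall fun ξ => Real.abs_cos_le_one _)).const_mul _
  calc maternQuad α d v y
      = ∑ i, ∑ j, ∫ ξ, v i * v j * (Real.cos ((y i - y j) ⬝ᵥ ξ) * maternWeight α d ξ) := by
        simp only [integral_const_mul]
        rfl
    _ = ∫ ξ, ∑ i, ∑ j, v i * v j * (Real.cos ((y i - y j) ⬝ᵥ ξ) * maternWeight α d ξ) := by
        rw [integral_finsetSum _ fun i _ => integrable_finsetSum _ fun j _ => hterm i j]
        exact Finset.sum_congr rfl fun i _ => (integral_finsetSum _ fun j _ => hterm i j).symm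
    _ = ∫ ξ, ‖expSum v y ξ‖ ^ 2 * maternWeight α d ξ := by
        simp only [norm_expSum_sq, Finset.sum_mul, mul_assoc]

theorem maternQuad_nonneg {α : ℝ} (hα : 0 < α) (v : ι → ℝ) (y : ι → Fin d → ℝ) :
    0 ≤ maternQuad α d v y := by
  rw [maternQuad_eq_integral hα]
  exact integral_nonneg fun ξ => mul_nonneg (sq_nonneg _) (maternWeight_pos α ξ).le

theorem maternQuad_sub_const (α : ℝ) (v : ι → ℝ) (y : ι → Fin d → ℝ) (z : Fin d → ℝ) :
    maternQuad α d v (fun i => y i - z) = maternQuad α d v y := by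
  simp only [maternQuad, sub_sub_sub_cancel_right]

end ExpSum

section NativeSpace

variable {α : ℝ} {d : ℕ}

theorem nativeNormLE_of_fourier (hα : 0 < α) {F : (Fin d → ℝ) → ℂ} (hF : Integrable F)
    (hF2 : Integrable fun ξ => ‖F ξ‖ ^ 2 / maternWeight α d ξ) {φ : (Fin d → ℝ) → ℝ}
    (hφ : ∀ y, (φ y : ℂ) = ∫ ξ, Complex.exp ((y ⬝ᵥ ξ : ℝ) * Complex.I) * F ξ) :
    NativeNormLE α φ √(∫ ξ, ‖F ξ‖ ^ 2 / maternWeight α d ξ) := by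
  intro ι _ v y
  have hterm (i : ι) : Integrable fun ξ =>
      (v i : ℂ) * (Complex.exp ((y i ⬝ᵥ ξ : ℝ) * Complex.I) * F ξ) := by
    have hcont : Continuous fun ξ => Complex.exp ((y i ⬝ᵥ ξ : ℝ) * Complex.I) := by
      unfold dotProduct
      fun_prop
    exact (hF.bdd_mul (c := 1) hcont.aestronglyMeasurable
      (.of_forall fun ξ => (Complex.norm_exp_ofReal_mul_I _).le)).const_mul _
  have hsum : ((∑ i, v i * φ (y i) : ℝ) : ℂ) = ∫ ξ, expSum v y ξ * F ξ := by
    push_cast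
    simp only [hφ, ← integral_const_mul]
    rw [← integral_finsetSum _ fun i _ => hterm i]
    simp only [expSum, Finset.sum_mul, mul_assoc]
  calc (∑ i, v i * φ (y i)) ^ 2 = ‖∫ ξ, expSum v y ξ * F ξ‖ ^ 2 := by
        rw [← hsum, Complex.norm_real, Real.norm_eq_abs, sq_abs]
    _ ≤ (∫ ξ, ‖F ξ‖ ^ 2 / maternWeight α d ξ) *
          ∫ ξ, ‖expSum v y ξ‖ ^ 2 * maternWeight α d ξ :=
        sq_norm_integral_mul_le (maternWeight_pos α)
          (continuous_maternWeight α d).aestronglyMeasurable hF.aestronglyMeasurable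
          (continuous_expSum v y).aestronglyMeasurable hF2 (integrable_norm_expSum_sq_mul hα v y)
    _ = √(∫ ξ, ‖F ξ‖ ^ 2 / maternWeight α d ξ) ^ 2 * maternQuad α d v y := by
        rw [maternQuad_eq_integral hα, Real.sq_sqrt]
        exact integral_nonneg fun ξ => div_nonneg (sq_nonneg _) (maternWeight_pos α ξ).le

theorem integrable_schwartz_sq_div_maternWeight (α : ℝ)
    (G : 𝓢(EuclideanSpace ℝ (Fin d), ℂ)) :
    Integrable fun ξ : Fin d → ℝ => ‖G (WithLp.toLp 2 ξ)‖ ^ 2 / maternWeight α d ξ := by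
  let p : ℝ := (α + (d : ℝ) / 2) / 2
  let bessel : EuclideanSpace ℝ (Fin d) → ℝ := fun x => (1 + ‖x‖ ^ 2) ^ p
  have hbessel : bessel.HasTemperateGrowth :=
    Function.hasTemperateGrowth_one_add_norm_sq_rpow (EuclideanSpace ℝ (Fin d)) p
  have hint := (memLp_two_iff_integrable_sq_norm
    (SchwartzMap.smulLeftCLM ℂ bessel G).continuous.aestronglyMeasurable).1
      ((SchwartzMap.smulLeftCLM ℂ bessel G).memLp 2 volume)
  have hcomp := (PiLp.volume_preserving_toLp (Fin d)).integrable_comp_of_integrable hint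
  refine hcomp.congr (.of_forall fun ξ => ?_)
  have hbase : 0 ≤ 1 + ∑ j, ξ j ^ 2 := by positivity
  have hsq : bessel (WithLp.toLp 2 ξ) ^ 2 = (maternWeight α d ξ)⁻¹ := by
    simp only [bessel, p, EuclideanSpace.norm_sq_eq, Real.norm_eq_abs, sq_abs, maternWeight]
    rw [Real.rpow_neg hbase, inv_inv, ← Real.rpow_mul_natCast hbase]
    congr 1
    push_cast
    ring
  simp only [Function.comp_apply, SchwartzMap.smulLeftCLM_apply_apply hbessel, norm_smul, mul_pow,
    Real.norm_eq_abs, sq_abs, hsq]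
  exact inv_mul_eq_div _ _

theorem exists_nativeNormLE_of_hasCompactSupport (hα : 0 < α) {φ : (Fin d → ℝ) → ℝ}
    (hφs : HasCompactSupport φ) (hφd : ContDiff ℝ ∞ φ) : ∃ N, NativeNormLE α φ N := by
  let e : EuclideanSpace ℝ (Fin d) ≃L[ℝ] (Fin d → ℝ) := EuclideanSpace.equiv (Fin d) ℝ
  let dilation : (Fin d → ℝ) ≃ₜ (Fin d → ℝ) :=
    Homeomorph.smulOfNeZero (2 * Real.pi) Real.two_pi_pos.ne'
  let g : EuclideanSpace ℝ (Fin d) → ℂ := fun x => (φ ((2 * Real.pi) • e x) : ℂ)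
  have hgs : HasCompactSupport g :=
    (hφs.comp_homeomorph (e.toHomeomorph.trans dilation)).comp_left
      (g := fun t : ℝ => (t : ℂ)) Complex.ofReal_zero
  have hgd : ContDiff ℝ ∞ g :=
    Complex.ofRealCLM.contDiff.comp (hφd.comp (e.contDiff.const_smul _))
  let S : 𝓢(EuclideanSpace ℝ (Fin d), ℂ) := hgs.toSchwartzMap hgd
  let F : (Fin d → ℝ) → ℂ := fun ξ => (𝓕 S) (WithLp.toLp 2 ξ)
  have hF : Integrable F :=
    (PiLp.volume_preserving_toLp (Fin d)).integrable_comp_of_integrable (𝓕 S).integrable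
  refine ⟨_, nativeNormLE_of_fourier hα hF
    (integrable_schwartz_sq_div_maternWeight α (𝓕 S)) fun y => ?_⟩
  let x : EuclideanSpace ℝ (Fin d) := WithLp.toLp 2 ((2 * Real.pi)⁻¹ • y)
  have hinner (ξ : Fin d → ℝ) : 2 * Real.pi * inner ℝ (WithLp.toLp 2 ξ) x = y ⬝ᵥ ξ := by
    rw [EuclideanSpace.inner_eq_star_dotProduct]
    simp only [x, star_trivial, smul_dotProduct, smul_eq_mul]
    field_simp
  have hx : (2 * Real.pi) • e x = y := smul_inv_smul₀ Real.two_pi_pos.ne' y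
  calc (φ y : ℂ) = φ ((2 * Real.pi) • e x) := by rw [hx]
    _ = S x := rfl
    _ = (𝓕⁻ (𝓕 S) : 𝓢(EuclideanSpace ℝ (Fin d), ℂ)) x := by
        rw [FourierTransform.fourierInv_fourier_eq]
    _ = ∫ ξ, Complex.exp ((y ⬝ᵥ ξ : ℝ) * Complex.I) * F ξ := by
        rw [SchwartzMap.fourierInv_coe, Real.fourierInv_eq',
          ← (PiLp.volume_preserving_toLp (Fin d)).integral_comp
            (MeasurableEquiv.toLp 2 (Fin d → ℝ)).measurableEmbedding]
        simp only [hinner, smul_eq_mul, F]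

theorem exists_bump_nativeNormLE (hα : 0 < α) (d : ℕ) {a b : ℝ} (ha : 0 < a) (hab : a < b) :
    ∃ (φ : (Fin d → ℝ) → ℝ) (N : ℝ), (∀ y, ‖y‖ ≤ a → φ y = 1) ∧ (∀ y, b ≤ ‖y‖ → φ y = 0) ∧
      NativeNormLE α φ N := by
  let f : ContDiffBump (0 : Fin d → ℝ) := ⟨a, b, ha, hab⟩
  obtain ⟨N, hN⟩ := exists_nativeNormLE_of_hasCompactSupport hα f.hasCompactSupport f.contDiff
  exact ⟨f, N, fun y hy => f.one_of_mem_closedBall (mem_closedBall_zero_iff.2 hy),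
    fun y hy => f.zero_of_le_dist (by simpa using hy), hN⟩

end NativeSpace

/-! ### Functionals annihilating polynomials -/

theorem maternWeight_le_norm_rpow {α : ℝ} (hα : 0 < α) {d : ℕ} {ξ : Fin d → ℝ} (hξ : ξ ≠ 0) :
    maternWeight α d ξ ≤ ‖ξ‖ ^ (-(2 * α + d)) := by
  have hpos : 0 < ‖ξ‖ := norm_pos_iff.2 hξ
  calc maternWeight α d ξ ≤ (‖ξ‖ ^ 2) ^ (-(α + (d : ℝ) / 2)) :=
        Real.rpow_le_rpow_of_nonpos (by positivity) (by linarith [norm_sq_le_sum_sq ξ])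
          (neg_nonpos.2 (by positivity))
    _ = ‖ξ‖ ^ (-(2 * α + d)) := by
        rw [← Real.rpow_natCast, ← Real.rpow_mul hpos.le]
        congr 1
        push_cast
        ring

/-- Dominates, up to scaling, `‖expSum v y η‖ ^ 2 * maternWeight α d η` for weights `v` whose
moments of order less than `n` vanish. -/
def vanishingMajorant (α : ℝ) (d n : ℕ) (η : Fin d → ℝ) : ℝ :=
  min 1 (‖η‖ ^ n) ^ 2 * ‖η‖ ^ (-(2 * α + d))

theorem vanishingMajorant_nonneg (α : ℝ) {d : ℕ} (n : ℕ) (η : Fin d → ℝ) :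
    0 ≤ vanishingMajorant α d n η := by
  unfold vanishingMajorant
  positivity

theorem integrable_vanishingMajorant {α : ℝ} (hα : 0 < α) {n : ℕ} (hn : α < n) {d : ℕ}
    (hd : 1 ≤ d) : Integrable (vanishingMajorant α d n) := by
  have : Nonempty (Fin d) := ⟨⟨0, hd⟩⟩
  refine (integrable_fun_norm_addHaar (volume : Measure (Fin d → ℝ))
    (f := fun t : ℝ => min 1 (t ^ n) ^ 2 * t ^ (-(2 * α + (d : ℝ))))).2 ?_
  have hpolar {t : ℝ} (ht : 0 < t) : t ^ (Module.finrank ℝ (Fin d → ℝ) - 1) •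
      (min 1 (t ^ n) ^ 2 * t ^ (-(2 * α + (d : ℝ)))) =
        min 1 (t ^ n) ^ 2 * t ^ (-2 * α - 1) := by
    rw [smul_eq_mul, mul_left_comm, Module.finrank_fin_fun, ← Real.rpow_natCast t (d - 1),
      ← Real.rpow_add ht, Nat.cast_sub hd]
    congr 2
    push_cast
    ring
  have hnear : IntegrableOn (fun t : ℝ => t ^ (2 * (n : ℝ) - 2 * α - 1)) (Set.Ioc 0 1) := by
    rw [integrableOn_Ioc_iff_integrableOn_Ioo, intervalIntegral.integrableOn_Ioo_rpow_iff one_pos]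
    linarith
  have hfar : IntegrableOn (fun t : ℝ => t ^ (-2 * α - 1)) (Set.Ioi 1) :=
    integrableOn_Ioi_rpow_of_lt (by linarith) one_pos
  rw [← Set.Ioc_union_Ioi_eq_Ioi zero_le_one, integrableOn_union]
  constructor
  · refine hnear.congr_fun (fun t ht => ?_) measurableSet_Ioc
    calc t ^ (2 * (n : ℝ) - 2 * α - 1) = min 1 (t ^ n) ^ 2 * t ^ (-2 * α - 1) := by
          rw [min_eq_right (pow_le_one₀ ht.1.le ht.2), ← pow_mul, ← Real.rpow_natCast t (n * 2),
            ← Real.rpow_add ht.1]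
          congr 1
          push_cast
          ring
      _ = _ := (hpolar ht.1).symm
  · refine hfar.congr_fun (fun t ht => ?_) measurableSet_Ioi
    rw [hpolar (one_pos.trans ht), min_eq_left (one_le_pow₀ (le_of_lt ht)), one_pow, one_mul]

theorem abs_dotProduct_le {ι : Type*} [Fintype ι] (y ξ : ι → ℝ) :
    |y ⬝ᵥ ξ| ≤ Fintype.card ι * ‖y‖ * ‖ξ‖ := by
  calc |y ⬝ᵥ ξ| ≤ ∑ t, |y t * ξ t| := Finset.abs_sum_le_sum_abs _ _
    _ ≤ ∑ _t : ι, ‖y‖ * ‖ξ‖ := by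
        gcongr with t
        rw [abs_mul]
        gcongr
        · exact norm_le_pi_norm y t
        · exact norm_le_pi_norm ξ t
    _ = Fintype.card ι * ‖y‖ * ‖ξ‖ := by simp [mul_assoc]

section VanishingMoments

variable {d l : ℕ} {ι : Type*} [Fintype ι] {v : ι → ℝ} {y : ι → Fin d → ℝ} {R : ℝ}

theorem AnnihilatesPoly.expSum_eq_sum_sub (h : AnnihilatesPoly l v y) (ξ : Fin d → ℝ) :
    expSum v y ξ = ∑ i, (v i : ℂ) * (Complex.exp ((y i ⬝ᵥ ξ : ℝ) * Complex.I) -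
      ∑ k ∈ Finset.range (l + 1), ((y i ⬝ᵥ ξ : ℝ) * Complex.I) ^ k / k.factorial) := by
  have hmoment (k : ℕ) (hk : k ∈ Finset.range (l + 1)) :
      ∑ i, (v i : ℂ) * (((y i ⬝ᵥ ξ : ℝ) * Complex.I) ^ k / k.factorial) = 0 := by
    have hreal : ((∑ i, v i * (y i ⬝ᵥ ξ) ^ k : ℝ) : ℂ) = 0 := by
      rw [h.sum_mul_dotProduct_pow ξ (Finset.mem_range_succ_iff.1 hk), Complex.ofReal_zero]
    push_cast at hreal
    calc ∑ i, (v i : ℂ) * (((y i ⬝ᵥ ξ : ℝ) * Complex.I) ^ k / k.factorial)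
        = (∑ i, (v i : ℂ) * ((y i ⬝ᵥ ξ : ℝ) : ℂ) ^ k) * (Complex.I ^ k / k.factorial) := by
          rw [Finset.sum_mul]
          exact Finset.sum_congr rfl fun i _ => by ring
      _ = 0 := by rw [hreal, zero_mul]
  have htaylor : ∑ i, (v i : ℂ) *
      ∑ k ∈ Finset.range (l + 1), ((y i ⬝ᵥ ξ : ℝ) * Complex.I) ^ k / k.factorial = 0 := by
    simp only [Finset.mul_sum]
    rw [Finset.sum_comm]
    exact Finset.sum_eq_zero hmoment
  simp only [mul_sub, Finset.sum_sub_distrib, htaylor, sub_zero, expSum]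

theorem AnnihilatesPoly.norm_expSum_le (h : AnnihilatesPoly l v y) (hy : ∀ i, ‖y i‖ ≤ R)
    (hR : 0 ≤ R) (ξ : Fin d → ℝ) :
    ‖expSum v y ξ‖ ≤ Real.exp 1 * (∑ i, |v i|) * min 1 ((d * R * ‖ξ‖) ^ (l + 1)) := by
  set T := d * R * ‖ξ‖
  have hT : 0 ≤ T := by positivity
  have hphase (i : ι) : ‖((y i ⬝ᵥ ξ : ℝ) * Complex.I : ℂ)‖ ≤ T := by
    rw [norm_mul, Complex.norm_I, mul_one, Complex.norm_real]
    calc |y i ⬝ᵥ ξ| ≤ Fintype.card (Fin d) * ‖y i‖ * ‖ξ‖ := abs_dotProduct_le (y i) ξ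
      _ ≤ d * R * ‖ξ‖ := by
        rw [Fintype.card_fin]
        gcongr
        exact hy i
  rcases le_total T 1 with hT1 | hT1
  · rw [min_eq_right (pow_le_one₀ hT hT1), h.expSum_eq_sum_sub, Finset.mul_sum, Finset.sum_mul]
    refine norm_sum_le_of_le _ fun i _ => ?_
    rw [norm_mul, Complex.norm_real, Real.norm_eq_abs]
    calc |v i| * _ ≤ |v i| * (T ^ (l + 1) * Real.exp 1) := by
          refine mul_le_mul_of_nonneg_left ?_ (abs_nonneg _)
          refine (Complex.norm_exp_sub_sum_le_norm_mul_exp _ _).trans ?_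
          gcongr
          · exact hphase i
          · exact (hphase i).trans hT1
      _ = Real.exp 1 * |v i| * T ^ (l + 1) := by ring
  · rw [min_eq_left (one_le_pow₀ hT1), mul_one]
    exact (_root_.norm_expSum_le v y ξ).trans
      (le_mul_of_one_le_left (by positivity) (Real.one_le_exp zero_le_one))

theorem AnnihilatesPoly.norm_expSum_sq_mul_le {α : ℝ} (hα : 0 < α) (h : AnnihilatesPoly l v y)
    (hy : ∀ i, ‖y i‖ ≤ R) (hR : 0 < R) (hd : 1 ≤ d) (ξ : Fin d → ℝ) :
    ‖expSum v y ξ‖ ^ 2 * maternWeight α d ξ ≤ (Real.exp 1 * ∑ i, |v i|) ^ 2 *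
      (d * R) ^ (2 * α + d) * vanishingMajorant α d (l + 1) ((d * R) • ξ) := by
  have hexp := h.norm_expSum_le hy hR.le ξ
  set B := Real.exp 1 * ∑ i, |v i|
  have hr : 0 < d * R := mul_pos (Nat.cast_pos.2 hd) hR
  rcases eq_or_ne ξ 0 with rfl | hξ
  · have hzero : expSum v y 0 = 0 := norm_le_zero_iff.1 (by simpa using hexp)
    rw [hzero, norm_zero, zero_pow two_ne_zero, zero_mul]
    exact mul_nonneg (by positivity) (vanishingMajorant_nonneg α _ _)
  · calc ‖expSum v y ξ‖ ^ 2 * maternWeight α d ξ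
        ≤ (B * min 1 ((d * R * ‖ξ‖) ^ (l + 1))) ^ 2 * ‖ξ‖ ^ (-(2 * α + d)) := by
          gcongr
          · exact (maternWeight_pos α ξ).le
          · exact maternWeight_le_norm_rpow hα hξ
      _ = B ^ 2 * ((d * R) ^ (2 * α + d) * (d * R) ^ (-(2 * α + d))) *
            min 1 ((d * R * ‖ξ‖) ^ (l + 1)) ^ 2 * ‖ξ‖ ^ (-(2 * α + d)) := by
          rw [← Real.rpow_add hr, add_neg_cancel, Real.rpow_zero]
          ring
      _ = B ^ 2 * (d * R) ^ (2 * α + d) * vanishingMajorant α d (l + 1) ((d * R) • ξ) := by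
          rw [vanishingMajorant, norm_smul, Real.norm_of_nonneg hr.le,
            Real.mul_rpow hr.le (norm_nonneg ξ)]
          ring

theorem AnnihilatesPoly.maternQuad_le {α : ℝ} (hα : 0 < α) (hl : α < l + 1) (hd : 1 ≤ d)
    (h : AnnihilatesPoly l v y) (hy : ∀ i, ‖y i‖ ≤ R) (hR : 0 < R) :
    maternQuad α d v y ≤ (Real.exp 1 * ∑ i, |v i|) ^ 2 * (d * R) ^ (2 * α) *
      ∫ η, vanishingMajorant α d (l + 1) η := by
  have hr : 0 < d * R := mul_pos (Nat.cast_pos.2 hd) hR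
  have hmajorant : Integrable (vanishingMajorant α d (l + 1)) :=
    integrable_vanishingMajorant hα (by exact_mod_cast hl) hd
  calc maternQuad α d v y = ∫ ξ, ‖expSum v y ξ‖ ^ 2 * maternWeight α d ξ :=
        maternQuad_eq_integral hα v y
    _ ≤ ∫ ξ, (Real.exp 1 * ∑ i, |v i|) ^ 2 * (d * R) ^ (2 * α + d) *
          vanishingMajorant α d (l + 1) ((d * R) • ξ) :=
        integral_mono (integrable_norm_expSum_sq_mul hα v y)
          ((hmajorant.comp_smul hr.ne').const_mul _) (h.norm_expSum_sq_mul_le hα hy hR hd)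
    _ = (Real.exp 1 * ∑ i, |v i|) ^ 2 * (d * R) ^ (2 * α) *
          ∫ η, vanishingMajorant α d (l + 1) η := by
        rw [integral_const_mul, Measure.integral_comp_smul_of_nonneg _ _ _ (hR := hr.le),
          Module.finrank_fin_fun, Real.rpow_add hr, Real.rpow_natCast, smul_eq_mul]
        field_simp

end VanishingMoments

/-! ### Kernel interpolation -/

section Interpolation

variable {α : ℝ} {d m : ℕ}

theorem matern_neg (α : ℝ) (x : Fin d → ℝ) : matern α d (-x) = matern α d x := by
  simp only [matern, Pi.neg_apply, neg_mul, Finset.sum_neg_distrib, Real.cos_neg]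

theorem maternQuad_eq_dotProduct (α : ℝ) (v : Fin m → ℝ) (y : Fin m → Fin d → ℝ) :
    maternQuad α d v y = v ⬝ᵥ (maternMat α d y *ᵥ v) := by
  simp only [maternQuad, dotProduct, mulVec, maternMat, of_apply, Finset.mul_sum]
  exact Finset.sum_congr rfl fun i _ => Finset.sum_congr rfl fun j _ => by ring

theorem posSemidef_maternMat (hα : 0 < α) (y : Fin m → Fin d → ℝ) :
    (maternMat α d y).PosSemidef := by
  refine .of_dotProduct_mulVec_nonneg (IsHermitian.ext fun i j => ?_) fun v => ?_
  · simp only [maternMat, of_apply, star_trivial]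
    rw [← matern_neg, neg_sub]
  · rw [star_trivial, ← maternQuad_eq_dotProduct]
    exact maternQuad_nonneg hα v y

theorem exists_sq_le_maternQuad_of_separated (hα : 0 < α) (d : ℕ) {δ : ℝ} (hδ : 0 < δ) :
    ∃ N : ℝ, ∀ ⦃ι : Type⦄ [Fintype ι] (v : ι → ℝ) (y : ι → Fin d → ℝ),
      (Pairwise fun i j => δ ≤ ‖y i - y j‖) → ∀ i, v i ^ 2 ≤ N ^ 2 * maternQuad α d v y := by
  obtain ⟨φ, N, hφ1, hφ0, hφN⟩ := exists_bump_nativeNormLE hα d (half_pos hδ) (half_lt_self hδ)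
  refine ⟨N, fun ι _ v y hsep i => ?_⟩
  have hsum : ∑ j, v j * φ (y j - y i) = v i := by
    rw [Finset.sum_eq_single i, sub_self, hφ1 0 (by rw [norm_zero]; positivity), mul_one]
    · intro j _ hji
      rw [hφ0 _ (hsep hji), mul_zero]
    · exact fun hi => absurd (Finset.mem_univ i) hi
  calc v i ^ 2 = (∑ j, v j * φ (y j - y i)) ^ 2 := by rw [hsum]
    _ ≤ N ^ 2 * maternQuad α d v fun j => y j - y i := hφN v _
    _ = N ^ 2 * maternQuad α d v y := by rw [maternQuad_sub_const]

theorem posDef_maternMat (hα : 0 < α) {y : Fin m → Fin d → ℝ} (hy : Function.Injective y) :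
    (maternMat α d y).PosDef := by
  have hev : ∀ᶠ δ in 𝓝[>] (0 : ℝ), Pairwise fun i j => δ ≤ ‖y i - y j‖ := by
    simp only [Pairwise, Filter.eventually_all]
    exact fun i j hij => nhdsWithin_le_nhds (Iic_mem_nhds (norm_sub_pos_iff.2 (hy.ne hij)))
  obtain ⟨δ, hsep, hδ⟩ := (hev.and self_mem_nhdsWithin).exists
  obtain ⟨N, hN⟩ := exists_sq_le_maternQuad_of_separated hα d hδ
  refine .of_dotProduct_mulVec_pos (posSemidef_maternMat hα y).isHermitian fun v hv => ?_
  obtain ⟨i, hi⟩ := Function.ne_iff.1 hv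
  rw [star_trivial, ← maternQuad_eq_dotProduct]
  have hpos : 0 < N ^ 2 * maternQuad α d v y := (sq_pos_of_ne_zero hi).trans_le (hN v y hsep i)
  exact pos_of_mul_pos_right hpos (sq_nonneg N)

theorem sub_two_mul_dotProduct_le_of_mulVec_eq {n : Type*} [Fintype n] {K : Matrix n n ℝ}
    (hK : K.PosSemidef) {a k : n → ℝ} (ha : K *ᵥ a = k) (u : n → ℝ) :
    a ⬝ᵥ (K *ᵥ a) - 2 * (a ⬝ᵥ k) ≤ u ⬝ᵥ (K *ᵥ u) - 2 * (u ⬝ᵥ k) := by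
  have hnonneg : 0 ≤ (u - a) ⬝ᵥ (K *ᵥ (u - a)) := by
    simpa using hK.dotProduct_mulVec_nonneg (u - a)
  have hsymm : a ⬝ᵥ (K *ᵥ u) = u ⬝ᵥ k := by
    rw [dotProduct_mulVec, ← mulVec_transpose, ← conjTranspose_eq_transpose_of_trivial,
      hK.isHermitian.eq, ha, dotProduct_comm]
  rw [mulVec_sub, sub_dotProduct, dotProduct_sub, dotProduct_sub, hsymm, ha] at hnonneg
  rw [ha]
  linarith

theorem maternQuad_errWeight (α : ℝ) (u : Fin m → ℝ) (x : Fin d → ℝ) (y : Fin m → Fin d → ℝ) :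
    maternQuad α d (errWeight u) (consPoint x y) =
      matern α d 0 + (u ⬝ᵥ (maternMat α d y *ᵥ u) - 2 * (u ⬝ᵥ maternVec α d y x)) := by
  have hsymm (i : Fin m) : matern α d (x - y i) = maternVec α d y x i := by
    rw [maternVec, ← matern_neg, neg_sub]
  have hvec (i : Fin m) : matern α d (y i - x) = maternVec α d y x i := rfl
  rw [← maternQuad_eq_dotProduct]
  simp only [maternQuad, Fintype.sum_option, errWeight, consPoint, Option.elim, hsymm, hvec,
    sub_self, dotProduct, Finset.sum_add_distrib, neg_mul, mul_neg, one_mul, mul_one,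
    Finset.sum_neg_distrib]
  ring

theorem maternQuad_errWeight_le (hα : 0 < α) {a : Fin m → ℝ} {x : Fin d → ℝ}
    {y : Fin m → Fin d → ℝ} (ha : maternMat α d y *ᵥ a = maternVec α d y x) (u : Fin m → ℝ) :
    maternQuad α d (errWeight a) (consPoint x y) ≤
      maternQuad α d (errWeight u) (consPoint x y) := by
  rw [maternQuad_errWeight, maternQuad_errWeight]
  gcongr _ + ?_
  exact sub_two_mul_dotProduct_le_of_mulVec_eq (posSemidef_maternMat hα y) ha u

end Interpolation

/-! ### The error for constants -/

/-- The points `y` have mutual distances at least `δ` and lie in a ball of radius `ρ`, in the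
supremum norm. -/
def IsSeparatedInBall {d : ℕ} {ι : Type*} (δ ρ : ℝ) (y : ι → Fin d → ℝ) : Prop :=
  (Pairwise fun i j => δ ≤ ‖y i - y j‖) ∧ ∃ z, ∀ i, ‖y i - z‖ ≤ ρ

namespace IsSeparatedInBall

variable {d : ℕ} {ι : Type*} {δ ρ : ℝ} {y : ι → Fin d → ℝ}

theorem injective (h : IsSeparatedInBall δ ρ y) (hδ : 0 < δ) : Function.Injective y :=
  fun i j hij => by_contra fun hne => by
    have hle : δ ≤ ‖y i - y j‖ := h.1 hne
    rw [hij, sub_self, norm_zero] at hle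
    exact hle.not_gt hδ

theorem smul (h : IsSeparatedInBall δ ρ y) {τ : ℝ} (hτ : 0 ≤ τ) :
    IsSeparatedInBall (τ * δ) (τ * ρ) fun i => τ • y i := by
  obtain ⟨hsep, z, hball⟩ := h
  have hnorm (p q : Fin d → ℝ) : ‖τ • p - τ • q‖ = τ * ‖p - q‖ := by
    rw [← smul_sub, norm_smul, Real.norm_of_nonneg hτ]
  refine ⟨hsep.mono fun i j hij => ?_, τ • z, fun i => ?_⟩
  · rw [hnorm]
    exact mul_le_mul_of_nonneg_left hij hτ
  · rw [hnorm]
    exact mul_le_mul_of_nonneg_left (hball i) hτ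

end IsSeparatedInBall

section Error

variable {α : ℝ} {d l : ℕ}

theorem exists_sq_sum_le_of_annihilatesPoly (hα : 0 < α) (hl : α < l + 1) (hd : 1 ≤ d) {ρ : ℝ}
    (hρ : 0 < ρ) :
    ∃ C : ℝ, 0 ≤ C ∧ ∀ ⦃ι : Type⦄ [Fintype ι] {v v' : ι → ℝ} {y : ι → Fin d → ℝ} {z : Fin d → ℝ}
      {r : ℝ}, 0 < r → r ≤ 1 → (∀ i, ‖y i - z‖ ≤ ρ * r) → AnnihilatesPoly l v' y →
      maternQuad α d v y ≤ maternQuad α d v' y →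
        (∑ i, v i) ^ 2 ≤ C * (∑ i, |v' i|) ^ 2 * r ^ (2 * α) := by
  obtain ⟨φ, N, hφ1, -, hφN⟩ := exists_bump_nativeNormLE hα d hρ (lt_add_one ρ)
  set I := ∫ η, vanishingMajorant α d (l + 1) η
  have hI : 0 ≤ I := integral_nonneg (vanishingMajorant_nonneg α _)
  refine ⟨N ^ 2 * Real.exp 1 ^ 2 * (d * ρ) ^ (2 * α) * I, by positivity, ?_⟩
  intro ι _ v v' y z r hr hr1 hy hv' hle
  have hsum : ∑ i, v i * φ (y i - z) = ∑ i, v i := Finset.sum_congr rfl fun i _ => by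
    rw [hφ1 _ ((hy i).trans (mul_le_of_le_one_right hρ.le hr1)), mul_one]
  have hdecay := (hv'.sub_const z).maternQuad_le hα hl hd hy (mul_pos hρ hr)
  rw [maternQuad_sub_const] at hdecay
  calc (∑ i, v i) ^ 2 = (∑ i, v i * φ (y i - z)) ^ 2 := by rw [hsum]
    _ ≤ N ^ 2 * maternQuad α d v fun i => y i - z := hφN v _
    _ = N ^ 2 * maternQuad α d v y := by rw [maternQuad_sub_const]
    _ ≤ N ^ 2 * ((Real.exp 1 * ∑ i, |v' i|) ^ 2 * (d * (ρ * r)) ^ (2 * α) * I) := by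
        gcongr
        exact hle.trans hdecay
    _ = N ^ 2 * Real.exp 1 ^ 2 * (d * ρ) ^ (2 * α) * I * (∑ i, |v' i|) ^ 2 * r ^ (2 * α) := by
        rw [← mul_assoc (d : ℝ), Real.mul_rpow (by positivity) hr.le]
        ring

theorem exists_sq_sum_le_of_separated (hα : 0 < α) (d : ℕ) {δ : ℝ} (hδ : 0 < δ) :
    ∃ N : ℝ, ∀ ⦃ι : Type⦄ [Fintype ι] (v : ι → ℝ) (y : ι → Fin d → ℝ),
      (Pairwise fun i j => δ ≤ ‖y i - y j‖) →
        (∑ i, v i) ^ 2 ≤ (N * Fintype.card ι) ^ 2 * maternQuad α d v y := by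
  obtain ⟨N, hN⟩ := exists_sq_le_maternQuad_of_separated hα d hδ
  refine ⟨N, fun ι _ v y hsep => ?_⟩
  calc (∑ i, v i) ^ 2 ≤ Fintype.card ι * ∑ i, v i ^ 2 := sq_sum_le_card_mul_sum_sq
    _ ≤ Fintype.card ι * ∑ _i : ι, N ^ 2 * maternQuad α d v y := by
        gcongr with i
        exact hN v y hsep i
    _ = (N * Fintype.card ι) ^ 2 * maternQuad α d v y := by
        rw [Finset.sum_const, Finset.card_univ, nsmul_eq_mul]
        ring

theorem exists_sq_one_sub_sum_le (hα : 0 < α) (hl : α < l + 1) (hd : 1 ≤ d) (m : ℕ) (c : ℝ)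
    {ρ δ : ℝ} (hρ : 0 < ρ) (hδ : 0 < δ) :
    ∃ C : ℝ, 0 ≤ C ∧ ∀ {y : Fin m → Fin d → ℝ} {x : Fin d → ℝ} {a u : Fin m → ℝ} {r : ℝ},
      0 < r → IsSeparatedInBall (δ * r) (ρ * r) (consPoint x y) →
      maternMat α d y *ᵥ a = maternVec α d y x →
      AnnihilatesPoly l (errWeight u) (consPoint x y) → ∑ i, |u i| ≤ c →
        (1 - ∑ i, a i) ^ 2 ≤ C * r ^ (2 * α) := by
  obtain ⟨C₁, hC₁, hsmall⟩ := exists_sq_sum_le_of_annihilatesPoly hα hl hd hρ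
  obtain ⟨N, hlarge⟩ := exists_sq_sum_le_of_separated hα d hδ
  set C := max (C₁ * (1 + c) ^ 2) ((N * (m + 1)) ^ 2 * matern α d 0)
  have hC : 0 ≤ C := le_max_of_le_left (by positivity)
  refine ⟨C, hC, fun {y x a u r} hr ⟨hsep, z, hball⟩ ha hu huc => ?_⟩
  rw [← sum_errWeight]
  rcases le_total r 1 with hr1 | hr1
  · calc (∑ o, errWeight a o) ^ 2 ≤ C₁ * (∑ o, |errWeight u o|) ^ 2 * r ^ (2 * α) :=
          hsmall hr hr1 hball hu (maternQuad_errWeight_le hα ha u)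
      _ ≤ C₁ * (1 + c) ^ 2 * r ^ (2 * α) := by
          rw [sum_abs_errWeight]
          gcongr
      _ ≤ C * r ^ (2 * α) := by
          gcongr
          exact le_max_left _ _
  · have hsepδ : Pairwise fun o o' => δ ≤ ‖consPoint x y o - consPoint x y o'‖ :=
      hsep.mono fun _ _ h => (le_mul_of_one_le_right hδ.le hr1).trans h
    have hzero : maternQuad α d (errWeight (0 : Fin m → ℝ)) (consPoint x y) = matern α d 0 := by
      rw [maternQuad_errWeight]
      simp
    calc (∑ o, errWeight a o) ^ 2
        ≤ (N * (m + 1)) ^ 2 * maternQuad α d (errWeight a) (consPoint x y) := by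
          simpa using hlarge (errWeight a) (consPoint x y) hsepδ
      _ ≤ (N * (m + 1)) ^ 2 * matern α d 0 := by
          gcongr
          exact (maternQuad_errWeight_le hα ha 0).trans_eq hzero
      _ ≤ C := le_max_right _ _
      _ ≤ C * r ^ (2 * α) :=
          le_mul_of_one_le_right hC (Real.one_le_rpow hr1 (by positivity))

theorem exists_abs_one_sub_sum_le (hα : 0 < α) (hl : α < l + 1) (hd : 1 ≤ d) (m : ℕ) (c : ℝ)
    {ρ δ : ℝ} (hρ : 0 < ρ) (hδ : 0 < δ) :
    ∃ C : ℝ, 0 < C ∧ ∀ {y : Fin m → Fin d → ℝ} {x : Fin d → ℝ} {a u : Fin m → ℝ} {r : ℝ},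
      0 < r → IsSeparatedInBall (δ * r) (ρ * r) (consPoint x y) →
      maternMat α d y *ᵥ a = maternVec α d y x →
      AnnihilatesPoly l (errWeight u) (consPoint x y) → ∑ i, |u i| ≤ c →
        |1 - ∑ i, a i| ≤ C * r ^ α := by
  obtain ⟨C, hC, herror⟩ := exists_sq_one_sub_sum_le hα hl hd m c hρ hδ
  refine ⟨√C + 1, by positivity, fun {y x a u r} hr hy ha hu huc => ?_⟩
  have hsqrt : (√C * r ^ α) ^ 2 = C * r ^ (2 * α) := by
    rw [mul_pow, Real.sq_sqrt hC, mul_comm 2 α, Real.rpow_mul hr.le, Real.rpow_two]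
  calc |1 - ∑ i, a i| ≤ √C * r ^ α :=
        abs_le_of_sq_le_sq ((herror hr hy ha hu huc).trans_eq hsqrt.symm) (by positivity)
    _ ≤ (√C + 1) * r ^ α := by
        gcongr
        exact le_add_of_nonneg_right zero_le_one

end Error

theorem GeomHyp.isSeparatedInBall {α : ℝ} {d m : ℕ} {cL cd cN L : ℝ} {w : Fin m → Fin d → ℝ}
    {x : Fin d → ℝ} (h : GeomHyp α d cL cd cN L w x) :
    IsSeparatedInBall (cd * L) (cL * L) (consPoint x w) := by
  obtain ⟨z, s, hs, hsL, hw, hx, hww, hwx, -⟩ := h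
  have hball {y : Fin d → ℝ} (hy : y ∈ cube d z s) : ‖y - z‖ ≤ cL * L :=
    (pi_norm_le_iff_of_nonneg (hs.trans hsL)).2 fun t => abs_le.2 <| by
      constructor <;> linarith [hy t, Pi.sub_apply y z t]
  have hsup {y y' : Fin d → ℝ} : (∃ t, cd * L ≤ |y t - y' t|) → cd * L ≤ ‖y - y'‖ :=
    fun ⟨t, ht⟩ => ht.trans (norm_le_pi_norm (y - y') t)
  refine ⟨?_, z, Option.rec (hball hx) fun i => hball (hw i)⟩
  rintro (_ | i) (_ | j) hne
  · exact absurd rfl hne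
  · exact (hsup (hwx j)).trans_eq (norm_sub_rev _ _)
  · exact hsup (hwx i)
  · exact hsup (hww i j fun hij => hne (congrArg some hij))

theorem GeomHyp.isNorming_singleton {α : ℝ} {d m : ℕ} {cL cd cN L : ℝ} {w : Fin m → Fin d → ℝ}
    {x : Fin d → ℝ} (h : GeomHyp α d cL cd cN L w x) : IsNorming (lbelow α) {x} w cN := by
  obtain ⟨z, s, -, -, -, hx, -, -, hnorming⟩ := h
  rintro P hP _ rfl
  exact hnorming P hP _ hx

theorem lt_lbelow_add_one {α : ℝ} (hα : 0 < α) (hnotnat : ¬ IsNatVal α) : α < lbelow α + 1 := by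
  have hceil : lbelow α + 1 = ⌈α⌉₊ := Nat.sub_add_cancel (Nat.ceil_pos.2 hα)
  have hlt : α < ⌈α⌉₊ := (Nat.le_ceil α).lt_of_ne fun h => hnotnat ⟨_, h⟩
  exact_mod_cast hceil ▸ hlt

theorem stmt17_general {α : ℝ} (hα : 0 < α) {l : ℕ} (hl : α < l + 1) {d : ℕ} (hd : 1 ≤ d) (m : ℕ)
    {cL cd : ℝ} (hcL : 0 < cL) (hcd : 0 < cd) (cN : ℝ) :
    ∃ C : ℝ, 0 < C ∧ ∀ {L : ℝ}, 0 < L → ∀ {x : Fin d → ℝ} {w : Fin m → Fin d → ℝ},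
      IsSeparatedInBall (cd * L) (cL * L) (consPoint x w) → IsNorming l {x} w cN →
      ∀ {τ : ℝ}, 0 < τ → ∀ c : ℝ,
        IsUnit (maternMat α d (fun i => τ • w i)).det ∧
        |c - c * ((fun _ => (1 : ℝ)) ⬝ᵥ ((maternMat α d (fun i => τ • w i))⁻¹ *ᵥ
            maternVec α d (fun i => τ • w i) (τ • x)))| ≤ C * |c| * (τ * L) ^ α := by
  obtain ⟨C, hC, herror⟩ := exists_abs_one_sub_sum_le hα hl hd m cN hcL hcd
  refine ⟨C, hC, fun {L} hL {x w} hsep hnorming {τ} hτ c => ?_⟩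
  set y : Fin m → Fin d → ℝ := fun i => τ • w i
  have hsep' : IsSeparatedInBall (cd * (τ * L)) (cL * (τ * L)) (consPoint (τ • x) y) := by
    simpa only [smul_consPoint, mul_left_comm τ] using hsep.smul hτ.le
  have hinj : Function.Injective y :=
    (hsep'.injective (by positivity)).comp (Option.some_injective _)
  have hunit : IsUnit (maternMat α d y).det :=
    (isUnit_iff_isUnit_det _).1 (posDef_maternMat hα hinj).isUnit
  refine ⟨hunit, ?_⟩
  set a := (maternMat α d y)⁻¹ *ᵥ maternVec α d y (τ • x) with ha_def
  have ha : maternMat α d y *ᵥ a = maternVec α d y (τ • x) := by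
    rw [ha_def, mulVec_mulVec, mul_nonsing_inv _ hunit, one_mulVec]
  obtain ⟨u, huc, hu⟩ := hnorming.exists_weights (Set.mem_singleton x)
  have hu' : AnnihilatesPoly l (errWeight u) (consPoint (τ • x) y) := by
    simpa only [smul_consPoint] using hu.smul τ
  have hdot : (fun _ => (1 : ℝ)) ⬝ᵥ a = ∑ i, a i := by simp only [dotProduct, one_mul]
  calc |c - c * ((fun _ => (1 : ℝ)) ⬝ᵥ a)| = |c| * |1 - ∑ i, a i| := by
        rw [hdot, ← abs_mul, mul_one_sub]
    _ ≤ |c| * (C * (τ * L) ^ α) := by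
        gcongr
        exact herror (mul_pos hτ hL) hsep' ha hu' huc
    _ = C * |c| * (τ * L) ^ α := by ring

/-- under the geometric hypotheses at scale `L ∈ (0,1]` (with `α ∉ ℕ`),
interpolating a constant `c ∈ [−1,1]` from `τA` to `τx` via the Matérn kernel incurs error at
most `C |c| (τL)^α`. -/
theorem stmt17 (α : ℝ) (hα : 0 < α) (hnotnat : ¬ IsNatVal α) (d : ℕ) (hd : 1 ≤ d)
    (cL cd cN : ℝ) (hcd : 0 < cd) (hcLcd : cd ≤ cL) (hcN : 0 < cN) :
    ∃ C : ℝ, 0 < C ∧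
      ∀ L : ℝ, 0 < L → L ≤ 1 → ∀ x : Fin d → ℝ,
        ∀ w : Fin ((lbelow α + d).choose (lbelow α)) → Fin d → ℝ,
          GeomHyp α d cL cd cN L w x →
          ∀ τ : ℝ, 0 < τ → ∀ c : ℝ, -1 ≤ c → c ≤ 1 →
            IsUnit (maternMat α d (fun i t => τ * w i t)).det ∧
            |c - c * ((fun _ : Fin ((lbelow α + d).choose (lbelow α)) => (1 : ℝ)) ⬝ᵥ
                ((maternMat α d (fun i t => τ * w i t))⁻¹ *ᵥ
                  maternVec α d (fun i t => τ * w i t) (fun t => τ * x t)))| ≤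
              C * |c| * (τ * L) ^ α := by
  obtain ⟨C, hC, herror⟩ :=
    stmt17_general hα (lt_lbelow_add_one hα hnotnat) hd _ (hcd.trans_le hcLcd) hcd cN
  exact ⟨C, hC, fun L hL _ x w hw τ hτ c _ _ =>
    herror hL hw.isSeparatedInBall hw.isNorming_singleton hτ c⟩
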